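/- arXiv:1605.00978 — 4 statements merged into one kernel-verified Lean document; each statement's English description precedes it below -/
import Mathlib

section
/- Let 𝒟 = (D_0,…,D_m) be a D-flag of length m with gaps g_1 < … < g_m, and let 𝓜_0 ⊆ 𝓜_1 ⊆ … ⊆ 𝓜_m be a flag of standard modules with D_{𝓜_i} = D_i for all i. For 1 ≤ i ≤ m pick any m_i ∈ 𝓜_i with ν(m_i) = g_i. Then m_i ∉ 𝓜_0, 𝔪·m_i ⊆ 𝓜_0, and the ℂ-subspace 𝓜_0 + ℂ m_i of 𝒪 is an ℛ-submodule; moreover it is a standard module with set of added gaps D_0 ∪ {g_i}. -/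
open PowerSeries

noncomputable section

/-- `𝒪 = ℂ⟦z⟧`, the ring of formal power series over `ℂ`. -/
abbrev 𝒪 : Type := PowerSeries ℂ

/-- `ν(f)`: the order of a power series (least `n` with nonzero coefficient);
only meaningful for `f ≠ 0`. -/
noncomputable def ord (f : 𝒪) : ℕ := sInf {n : ℕ | PowerSeries.coeff n f ≠ 0}

/-- The value semigroup `Γ = {ν(x) : 0 ≠ x ∈ ℛ}` of a subalgebra `ℛ ⊆ 𝒪`. -/
def SGamma (R : Subalgebra ℂ 𝒪) : Set ℕ := {n | ∃ x ∈ R, x ≠ (0:𝒪) ∧ ord x = n}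

/-- The set of gaps `G = ℕ ∖ Γ`. -/
def Gaps (R : Subalgebra ℂ 𝒪) : Set ℕ := (SGamma R)ᶜ

/-- `Δ` is a `Γ`-module: `Γ + Δ ⊆ Δ`. -/
def IsGammaModule (Γ Δ : Set ℕ) : Prop := ∀ a ∈ Γ, ∀ d ∈ Δ, a + d ∈ Δ

/-- `Δ_𝓜 = {ν(x) : 0 ≠ x ∈ 𝓜}` for an `ℛ`-submodule `𝓜 ⊆ 𝒪`. -/
def DeltaM (R : Subalgebra ℂ 𝒪) (M : Submodule ↥R 𝒪) : Set ℕ :=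
  {n | ∃ x ∈ M, x ≠ (0:𝒪) ∧ ord x = n}

/-- `D_𝓜 = Δ_𝓜 ∩ G`, the set of added gaps. -/
def Dset (R : Subalgebra ℂ 𝒪) (M : Submodule ↥R 𝒪) : Set ℕ := DeltaM R M ∩ Gaps R

/-- A standard module: a finitely generated `ℛ`-submodule of `𝒪` containing an
element of order `0`. -/
def IsStd (R : Subalgebra ℂ 𝒪) (M : Submodule ↥R 𝒪) : Prop :=
  M.FG ∧ ∃ x ∈ M, x ≠ (0:𝒪) ∧ ord x = 0

/-- `c ≥ 1` is the conductor of `ℛ`: the minimal exponent with `z^c𝒪 ⊆ ℛ`. -/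
def HasConductor (R : Subalgebra ℂ 𝒪) (c : ℕ) : Prop :=
  1 ≤ c ∧ (∀ f : 𝒪, (PowerSeries.X : 𝒪)^c * f ∈ R) ∧
    ∀ c' : ℕ, (∀ f : 𝒪, (PowerSeries.X : 𝒪)^c' * f ∈ R) → c ≤ c'

/-- `z^j𝒪` as a `ℂ`-submodule of `𝒪`. -/
def zO (j : ℕ) : Submodule ℂ 𝒪 :=
  LinearMap.range (LinearMap.mulLeft ℂ ((PowerSeries.X : 𝒪)^j))

/-- `𝔪𝓜` as a `ℂ`-submodule of `𝒪`, where `𝔪 = {x ∈ ℛ : x = 0 or ν(x) > 0}`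
is the maximal ideal of `ℛ`. -/
def mSmul (R : Subalgebra ℂ 𝒪) (M : Submodule ↥R 𝒪) : Submodule ℂ 𝒪 :=
  Submodule.span ℂ {z : 𝒪 | ∃ r ∈ (R : Set 𝒪), ∃ y ∈ M, (r = 0 ∨ 0 < ord r) ∧ z = r * y}

/-- `dim_ℂ (A / B)` for `ℂ`-subspaces; intended for `B ≤ A`. -/
noncomputable def quotDim (A B : Submodule ℂ 𝒪) : ℕ :=
  Module.finrank ℂ (↥A ⧸ Submodule.comap A.subtype B)

/-- `D_i = D_0 ∪ {g_1, …, g_i}` (the gaps `g` are indexed by `1, …, m`). -/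
def DFlagSet (D0 : Set ℕ) (g : ℕ → ℕ) (i : ℕ) : Set ℕ := D0 ∪ g '' Set.Icc 1 i

/-- `(D_0, …, D_m)` with `D_i = D_0 ∪ {g_1 < … < g_i}` is a `D`-flag:
all `Δ_i = Γ ∪ D_i` are `Γ`-modules. -/
def IsDFlag (R : Subalgebra ℂ 𝒪) (m : ℕ) (D0 : Set ℕ) (g : ℕ → ℕ) : Prop :=
  D0 ⊆ Gaps R ∧ StrictMonoOn g (Set.Icc 1 m) ∧
  (∀ i, 1 ≤ i → i ≤ m → g i ∈ Gaps R \ D0) ∧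
  (∀ i ≤ m, IsGammaModule (SGamma R) (SGamma R ∪ DFlagSet D0 g i))

/-- A `D`-flag is admissible if it is realized by a flag of standard modules. -/
def IsAdmissibleFlag (R : Subalgebra ℂ 𝒪) (m : ℕ) (D0 : Set ℕ) (g : ℕ → ℕ) : Prop :=
  ∃ MM : ℕ → Submodule ↥R 𝒪, (∀ i, i < m → MM i ≤ MM (i+1)) ∧
    ∀ i ≤ m, IsStd R (MM i) ∧ Dset R (MM i) = DFlagSet D0 g i

/-- The subalgebra `ℂ[z^a, z^b + z^c] + z^N ℂ⟦z⟧` of `𝒪`. -/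
def Rring (a b c N : ℕ) : Subalgebra ℂ 𝒪 where
  carrier := {f : 𝒪 | ∃ p ∈ Algebra.adjoin ℂ
      ({(PowerSeries.X : 𝒪)^a, (PowerSeries.X : 𝒪)^b + (PowerSeries.X : 𝒪)^c} : Set 𝒪),
    ∃ g : 𝒪, f = p + (PowerSeries.X : 𝒪)^N * g}
  mul_mem' := by
    rintro x y ⟨p, hp, gx, rfl⟩ ⟨q, hq, gy, rfl⟩
    exact ⟨p * q, mul_mem hp hq,
      p * gy + gx * q + (PowerSeries.X : 𝒪)^N * (gx * gy), by ring⟩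
  one_mem' := ⟨1, one_mem _, 0, by ring⟩
  add_mem' := by
    rintro x y ⟨p, hp, gx, rfl⟩ ⟨q, hq, gy, rfl⟩
    exact ⟨p + q, add_mem hp hq, gx + gy, by ring⟩
  zero_mem' := ⟨0, zero_mem _, 0, by ring⟩
  algebraMap_mem' := fun r => ⟨algebraMap ℂ 𝒪 r, Subalgebra.algebraMap_mem _ r, 0, by ring⟩

/-- The ring `ℂ⟦z^4, z^{2u}+z^v⟧ = ℂ[z^4, z^{2u}+z^v] + z^{4u+v}ℂ⟦z⟧` for the
plane curve singularity with Puiseux exponents `(4, 2u, v)`. -/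
def Rcal (u v : ℕ) : Subalgebra ℂ 𝒪 := Rring 4 (2*u) v (4*u+v)

/-- The gap counting function `γ_Δ(ℓ) = |[ℓ,∞) ∖ Δ|`. -/
noncomputable def gapCount (Δ : Set ℕ) (ℓ : ℕ) : ℕ := Set.ncard {k : ℕ | ℓ ≤ k ∧ k ∉ Δ}

/-- `n = n(D)`: the smallest odd number in `(Δ ∪ {v}) ∩ [2u, ∞)`. -/
noncomputable def nOdd (u v : ℕ) (Δ : Set ℕ) : ℕ :=
  sInf {k : ℕ | Odd k ∧ 2*u ≤ k ∧ (k ∈ Δ ∨ k = v)}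

/-- The dimension change `μ_{D,g}` of Theorem `dimprop` (for the family `(4,2u,v)`),
where `Γ` is the value semigroup. -/
noncomputable def muDim (u v : ℕ) (Γ : Set ℕ) (D : Set ℕ) (gp : ℕ) : ℕ :=
  let Δ : Set ℕ := Γ ∪ D
  let Δ' : Set ℕ := Δ ∪ {gp}
  let n : ℕ := nOdd u v Δ
  if gp % 4 = 2 then
    (gapCount Δ' gp - gapCount Δ' (gp+4)) - (gapCount Δ' (gp+n) - gapCount Δ' (gp+4+n))
  else gapCount Δ' gp - gapCount Δ' (gp+4)


lemma ord_char (x : 𝒪) (n : ℕ) : (x ≠ 0 ∧ ord x = n) ↔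
    (PowerSeries.coeff n x ≠ 0 ∧ ∀ j < n, PowerSeries.coeff j x = 0) := by
  constructor
  · rintro ⟨hx, rfl⟩
    have hS : {n : ℕ | PowerSeries.coeff n x ≠ 0}.Nonempty := by
      by_contra h
      apply hx
      ext k
      by_contra hk
      exact h ⟨k, by simpa using hk⟩
    refine ⟨Nat.sInf_mem hS, fun j hj => ?_⟩
    by_contra h
    exact Nat.notMem_of_lt_sInf hj h
  · rintro ⟨h, hj⟩
    refine ⟨fun h0 => h (by simp [h0]), ?_⟩
    apply le_antisymm
    · exact Nat.sInf_le h
    · apply le_csInf ⟨n, h⟩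
      intro b hb
      by_contra hlt
      exact hb (hj b (not_le.mp hlt))

lemma mem_DeltaM (R : Subalgebra ℂ 𝒪) (M : Submodule ↥R 𝒪) (n : ℕ) :
    n ∈ DeltaM R M ↔ ∃ x ∈ M, PowerSeries.coeff n x ≠ 0 ∧
      ∀ j < n, PowerSeries.coeff j x = 0 := by
  simp only [DeltaM, Set.mem_setOf_eq, ord_char]

lemma mul_mem_of (R : Subalgebra ℂ 𝒪) (M : Submodule ↥R 𝒪) {r x : 𝒪} (hr : r ∈ R)
    (hx : x ∈ M) : r * x ∈ M := by
  have := M.smul_mem (⟨r, hr⟩ : R) hx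
  simpa [Algebra.smul_def, Subalgebra.smul_def] using this

lemma C_mul_mem_of (R : Subalgebra ℂ 𝒪) (M : Submodule ↥R 𝒪) (a : ℂ) {x : 𝒪}
    (hx : x ∈ M) : PowerSeries.C a * x ∈ M :=
  mul_mem_of R M (R.algebraMap_mem a) hx

lemma gamma_sub (R : Subalgebra ℂ 𝒪) (M : Submodule ↥R 𝒪) (h : IsStd R M) :
    SGamma R ⊆ DeltaM R M := by
  rintro n ⟨r, hr, hr0⟩
  obtain ⟨-, u, hu, hu0⟩ := h
  rw [ord_char] at hu0 hr0
  rw [mem_DeltaM]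
  obtain ⟨p, rfl⟩ := PowerSeries.X_pow_dvd_iff.mpr hr0.2
  refine ⟨_, mul_mem_of R M hr hu, ?_, ?_⟩
  · have h1 := hr0.1
    have h2 := hu0.1
    rw [PowerSeries.coeff_X_pow_mul'] at h1
    rw [mul_assoc, PowerSeries.coeff_X_pow_mul']
    simp at h1 h2 ⊢
    exact ⟨h1, h2⟩
  · rw [← PowerSeries.X_pow_dvd_iff, mul_assoc]
    exact dvd_mul_right _ _

lemma cond_sub (R : Subalgebra ℂ 𝒪) (M : Submodule ↥R 𝒪) (h : IsStd R M) (c : ℕ)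
    (hc : HasConductor R c) (x : 𝒪) (hx : (PowerSeries.X : 𝒪) ^ c ∣ x) : x ∈ M := by
  obtain ⟨-, u, hu, hu0⟩ := h
  rw [ord_char] at hu0
  obtain ⟨f, rfl⟩ := hx
  have h2 := hu0.1
  have h3 : PowerSeries.constantCoeff u ≠ 0 := by simpa using h2
  have := mul_mem_of R M (hc.2.1 (f * u⁻¹)) hu
  rwa [mul_assoc, mul_assoc, PowerSeries.inv_mul_cancel u h3, mul_one] at this

lemma key (R : Subalgebra ℂ 𝒪) (c : ℕ) (hc : HasConductor R c) (M N : Submodule ↥R 𝒪)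
    (hM : IsStd R M) (hMN : M ≤ N) (b : ℕ)
    (hb : ∀ n ∈ DeltaM R N, b < n → n ∈ DeltaM R M) :
    ∀ t k : ℕ, c ≤ k + t → b < k → ∀ x ∈ N, (PowerSeries.X : 𝒪) ^ k ∣ x → x ∈ M := by
  intro t
  induction t with
  | zero =>
    intro k hk _ x _ hx
    exact cond_sub R M hM c hc x ((pow_dvd_pow _ (by simpa using hk)).trans hx)
  | succ t ih =>
    intro k hk hbk x hxN hx
    have hx' := PowerSeries.X_pow_dvd_iff.mp hx
    by_cases h0 : PowerSeries.coeff k x = 0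
    · refine ih (k+1) (by omega) (by omega) x hxN (PowerSeries.X_pow_dvd_iff.mpr ?_)
      intro j hj
      rcases Nat.lt_succ_iff_lt_or_eq.mp hj with h | rfl
      · exact hx' j h
      · exact h0
    · have hkN : k ∈ DeltaM R N := (mem_DeltaM R N k).2 ⟨x, hxN, h0, hx'⟩
      obtain ⟨y, hyM, hy0, hyj⟩ := (mem_DeltaM R M k).1 (hb k hkN hbk)
      set a : ℂ := PowerSeries.coeff k x / PowerSeries.coeff k y with ha
      have hay : PowerSeries.C a * y ∈ M := C_mul_mem_of R M a hyM
      have : x - PowerSeries.C a * y ∈ M := by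
        refine ih (k+1) (by omega) (by omega) _ (N.sub_mem hxN (hMN hay))
          (PowerSeries.X_pow_dvd_iff.mpr ?_)
        intro j hj
        rw [map_sub, PowerSeries.coeff_C_mul]
        rcases Nat.lt_succ_iff_lt_or_eq.mp hj with h | rfl
        · rw [hx' j h, hyj j h]; simp
        · rw [ha]; field_simp; simp
      simpa using M.add_mem this hay

/-- Given a flag of standard modules realizing a `D`-flag and `m_i ∈ 𝓜_i` with
`ν(m_i) = g_i`: then `m_i ∉ 𝓜_0`, `𝔪·m_i ⊆ 𝓜_0`, and the `ℂ`-subspace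
`𝓜_0 + ℂm_i` is an `ℛ`-submodule, indeed a standard module with set of added
gaps `D_0 ∪ {g_i}`. -/
theorem statement3 (R : Subalgebra ℂ 𝒪) (c : ℕ) (hR : HasConductor R c)
    (m : ℕ) (D0 : Set ℕ) (g : ℕ → ℕ) (hflag : IsDFlag R m D0 g)
    (MM : ℕ → Submodule ↥R 𝒪)
    (hmono : ∀ i, i < m → MM i ≤ MM (i+1))
    (hstd : ∀ i ≤ m, IsStd R (MM i))
    (hD : ∀ i ≤ m, Dset R (MM i) = DFlagSet D0 g i)
    (i : ℕ) (h1 : 1 ≤ i) (him : i ≤ m)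
    (mi : 𝒪) (hmi : mi ∈ MM i) (hne : mi ≠ 0) (hord : ord mi = g i) :
    mi ∉ MM 0 ∧
    (∀ r ∈ (R : Set 𝒪), (r = 0 ∨ 0 < ord r) → r * mi ∈ MM 0) ∧
    ∃ N : Submodule ↥R 𝒪,
      (N : Set 𝒪) = (((MM 0).restrictScalars ℂ ⊔ (ℂ ∙ mi) : Submodule ℂ 𝒪) : Set 𝒪) ∧
      IsStd R N ∧ Dset R N = D0 ∪ {g i} := by
  obtain ⟨hD0, hgm, hgap, -⟩ := hflag
  have hle : ∀ j ≤ m, MM 0 ≤ MM j := by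
    intro j
    induction j with
    | zero => intro _; exact le_rfl
    | succ j ih => intro hj; exact (ih (by omega)).trans (hmono j (by omega))
  have hD00 : Dset R (MM 0) = D0 := by
    rw [hD 0 (Nat.zero_le _)]; simp [DFlagSet]
  have hs0 := hstd 0 (Nat.zero_le _)
  have hgi := hgap i h1 him
  have hgΔ : g i ∉ DeltaM R (MM 0) := by
    intro h
    apply hgi.2
    rw [← hD00]
    exact ⟨h, hgi.1⟩
  have hmc := (ord_char mi (g i)).1 ⟨hne, hord⟩
  have hb : ∀ n ∈ DeltaM R (MM i), g i < n → n ∈ DeltaM R (MM 0) := by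
    intro n hn hlt
    by_cases hG : n ∈ SGamma R
    · exact gamma_sub R _ hs0 hG
    · have : n ∈ Dset R (MM i) := ⟨hn, hG⟩
      rw [hD i him] at this
      rcases this with h | ⟨j, hj, rfl⟩
      · rw [← hD00] at h
        exact h.1
      · exfalso
        have := hgm.monotoneOn ⟨hj.1, hj.2.trans him⟩ ⟨h1, him⟩ hj.2
        omega
  have hmul : ∀ r ∈ R, PowerSeries.constantCoeff r = 0 → r * mi ∈ MM 0 := by
    intro r hr hr0
    refine key R c hR (MM 0) (MM i) hs0 (hle i him) (g i) hb c (g i + 1) (by omega) (by omega) _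
      (mul_mem_of R _ hr hmi) ?_
    rw [pow_succ, mul_comm r]
    exact mul_dvd_mul (PowerSeries.X_pow_dvd_iff.mpr hmc.2) (PowerSeries.X_dvd_iff.mpr hr0)
  refine ⟨fun h => hgΔ ((mem_DeltaM _ _ _).2 ⟨mi, h, hmc⟩), ?_, ?_⟩
  · intro r hr h
    apply hmul r hr
    by_cases hr0 : r = 0
    · simp [hr0]
    · have h' := h.resolve_left hr0
      simpa using ((ord_char r (ord r)).1 ⟨hr0, rfl⟩).2 0 h'
  · have hmem : ∀ x : 𝒪, x ∈ MM 0 ⊔ Submodule.span R {mi} ↔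
        ∃ y ∈ MM 0, ∃ a : ℂ, x = y + PowerSeries.C a * mi := by
      intro x
      rw [Submodule.mem_sup]
      constructor
      · rintro ⟨y, hy, z, hz, rfl⟩
        obtain ⟨⟨r, hr⟩, rfl⟩ := Submodule.mem_span_singleton.1 hz
        have hr' : r - PowerSeries.C (PowerSeries.constantCoeff r) ∈ R :=
          R.sub_mem hr (R.algebraMap_mem _)
        have := hmul _ hr' (by simp)
        refine ⟨_, (MM 0).add_mem hy this, PowerSeries.constantCoeff r, ?_⟩
        rw [Subalgebra.smul_def, smul_eq_mul]
        ring
      · rintro ⟨y, hy, a, rfl⟩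
        exact ⟨y, hy, _, C_mul_mem_of R _ a (Submodule.mem_span_singleton_self mi), rfl⟩
    refine ⟨MM 0 ⊔ Submodule.span R {mi}, ?_, ⟨?_, ?_⟩, ?_⟩
    · ext x
      simp only [SetLike.mem_coe]
      rw [hmem, Submodule.mem_sup]
      constructor
      · rintro ⟨y, hy, a, rfl⟩
        exact ⟨y, hy, _, Submodule.mem_span_singleton.2 ⟨a, rfl⟩,
          by rw [PowerSeries.smul_eq_C_mul]⟩
      · rintro ⟨y, hy, z, hz, rfl⟩
        obtain ⟨a, rfl⟩ := Submodule.mem_span_singleton.1 hz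
        exact ⟨y, hy, a, by rw [PowerSeries.smul_eq_C_mul]⟩
    · exact hs0.1.sup (Submodule.fg_span_singleton mi)
    · obtain ⟨x, hx, h⟩ := hs0.2
      exact ⟨x, (le_sup_left : MM 0 ≤ _) hx, h⟩
    · ext n
      constructor
      · rintro ⟨hn, hG⟩
        rw [mem_DeltaM] at hn
        obtain ⟨x, hx, hxn, hxj⟩ := hn
        obtain ⟨y, hy, a, rfl⟩ := (hmem x).1 hx
        simp only [map_add, PowerSeries.coeff_C_mul] at hxn hxj
        rcases lt_trichotomy n (g i) with hlt | heq | hgt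
        · left
          rw [← hD00]
          refine ⟨(mem_DeltaM _ _ _).2 ⟨y, hy, ?_, ?_⟩, hG⟩
          · simpa [hmc.2 n hlt] using hxn
          · intro j hj
            simpa [hmc.2 j (hj.trans hlt)] using hxj j hj
        · right; exact heq
        · by_cases ha : a = 0
          · left
            rw [← hD00]
            subst ha
            exact ⟨(mem_DeltaM _ _ _).2 ⟨y, hy, by simpa using hxn, by simpa using hxj⟩, hG⟩
          · exfalso
            apply hgΔ
            refine (mem_DeltaM _ _ _).2 ⟨y, hy, ?_, ?_⟩
            · intro h
              have := hxj _ hgt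
              rw [h, zero_add] at this
              exact (mul_ne_zero ha hmc.1) this
            · intro j hj
              simpa [hmc.2 j hj] using hxj j (hj.trans hgt)
      · rintro (h | h)
        · rw [← hD00] at h
          obtain ⟨⟨x, hx, hx'⟩, hG⟩ := h
          exact ⟨⟨x, (le_sup_left : MM 0 ≤ _) hx, hx'⟩, hG⟩
        · rw [Set.mem_singleton_iff] at h
          subst h
          exact ⟨⟨mi, (le_sup_right : _ ≤ MM 0 ⊔ Submodule.span R {mi})
            (Submodule.mem_span_singleton_self mi), hne, hord⟩, hgi.1⟩

end
end

section
/- Let 𝒟 = (D_0,…,D_m) be a D-flag of length m with gaps g_1 < … < g_m, and let 𝓜_top be a standard module with D_{𝓜_top} = D_m such that, writing 𝓜̄ = 𝓜_top/𝔪𝓜_top and 𝓜̄^{(j)} for the image of 𝓜_top ∩ z^j𝒪 in 𝓜̄, one has dim_ℂ(𝓜̄^{(g_i)}/𝓜̄^{(g_i+1)}) = 1 for every 1 ≤ i ≤ m. Then there exists a flag of standard modules 𝓜_0 ⊆ 𝓜_1 ⊆ … ⊆ 𝓜_m = 𝓜_top with D_{𝓜_i} = D_i for all 0 ≤ i ≤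 m; in particular 𝒟 is admissible. -/
open PowerSeries

noncomputable section

lemma ord_spec (f : 𝒪) (hf : f ≠ 0) : PowerSeries.coeff (ord f) f ≠ 0 := by
  have : {n : ℕ | PowerSeries.coeff n f ≠ 0}.Nonempty := by
    by_contra h
    apply hf
    ext n
    by_contra hn
    exact h ⟨n, hn⟩
  exact Nat.sInf_mem this

lemma ord_lt (f : 𝒪) (k : ℕ) (hk : k < ord f) : PowerSeries.coeff k f = 0 := by
  by_contra h
  exact Nat.notMem_of_lt_sInf hk h

lemma ord_eq (f : 𝒪) (n : ℕ) (h : PowerSeries.coeff n f ≠ 0)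
    (h2 : ∀ k < n, PowerSeries.coeff k f = 0) : f ≠ 0 ∧ ord f = n := by
  have hf : f ≠ 0 := by
    rintro rfl
    simp at h
  refine ⟨hf, ?_⟩
  rcases lt_trichotomy (ord f) n with h3 | h3 | h3
  · exact absurd (h2 _ h3) (ord_spec f hf)
  · exact h3
  · exact absurd (ord_lt f n h3) h

lemma mem_zO (f : 𝒪) (j : ℕ) : f ∈ zO j ↔ ∀ k < j, PowerSeries.coeff k f = 0 := by
  rw [← PowerSeries.X_pow_dvd_iff]
  constructor
  · rintro ⟨y, rfl⟩
    exact ⟨y, rfl⟩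
  · rintro ⟨y, rfl⟩
    exact ⟨y, rfl⟩

/-- The functional attached to a gap. -/
lemma exists_functional (R : Subalgebra ℂ 𝒪) (M : Submodule ↥R 𝒪) (n : ℕ)
    (h : quotDim (((M.restrictScalars ℂ) ⊓ zO n) ⊔ mSmul R M)
              (((M.restrictScalars ℂ) ⊓ zO (n + 1)) ⊔ mSmul R M) = 1) :
    ∃ φ : 𝒪 →ₗ[ℂ] ℂ, (∀ x ∈ mSmul R M, φ x = 0) ∧
      (∀ x ∈ M, (∀ k < n + 1, PowerSeries.coeff k x = 0) → φ x = 0) ∧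
      (∀ x ∈ M, x ≠ 0 → ord x = n → φ x ≠ 0) := by
  set A := ((M.restrictScalars ℂ) ⊓ zO n) ⊔ mSmul R M with hA
  set B := ((M.restrictScalars ℂ) ⊓ zO (n + 1)) ⊔ mSmul R M with hB
  have hAB : ∃ a ∈ A, a ∉ B := by
    by_contra hcon
    push Not at hcon
    have htop : Submodule.comap A.subtype B = ⊤ := by
      rw [eq_top_iff]
      intro x _
      exact hcon x.1 x.2
    unfold quotDim at h
    rw [htop] at h
    have : Subsingleton (↥A ⧸ (⊤ : Submodule ℂ ↥A)) := inferInstance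
    rw [Module.finrank_zero_of_subsingleton] at h
    exact absurd h (by norm_num)
  obtain ⟨a, ha, haB⟩ := hAB
  obtain ⟨x, hx, y, hy, rfl⟩ := Submodule.mem_sup.1 ha
  have hxB : x ∉ B := fun hxB => haB (add_mem hxB (Submodule.mem_sup_right hy))
  obtain ⟨hxM, hxz⟩ := hx
  have hxM : x ∈ M := hxM
  have hxz : x ∈ zO n := hxz
  rw [mem_zO] at hxz
  have key : ∀ w ∈ M, (∀ k < n + 1, PowerSeries.coeff k w = 0) → w ∈ B := fun w hw hk =>
    Submodule.mem_sup_left ⟨hw, (mem_zO w (n+1)).2 hk⟩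
  have hMs : ∀ (a : ℂ) (w : 𝒪), w ∈ M → a • w ∈ M := fun a w hw =>
    (M.restrictScalars ℂ).smul_mem a hw
  obtain ⟨φ, hφ, hBφ⟩ := Submodule.exists_le_ker_of_notMem hxB
  refine ⟨φ, fun w hw => hBφ (Submodule.mem_sup_right hw), fun w hw hk => hBφ (key w hw hk), ?_⟩
  intro w hw hw0 hwn hφw
  have hc : PowerSeries.coeff n w ≠ 0 := hwn ▸ ord_spec w hw0
  have hc' : ∀ k < n, PowerSeries.coeff k w = 0 := fun k hk => ord_lt w k (hwn ▸ hk)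
  have hmem : x - (PowerSeries.coeff n x / PowerSeries.coeff n w) • w ∈ B := by
    apply key _ (sub_mem hxM (hMs _ _ hw))
    intro k hk
    rcases Nat.lt_succ_iff_lt_or_eq.1 hk with hk | rfl
    · simp [hxz k hk, hc' k hk]
    · simp [hc]
  have := hBφ hmem
  rw [LinearMap.mem_ker] at this
  simp [hφw] at this
  exact hφ this

lemma fg_of_contains (R : Subalgebra ℂ 𝒪) (c : ℕ) (h0 : 1 ≤ c)
    (hc : ∀ f : 𝒪, (PowerSeries.X : 𝒪)^c * f ∈ R) (M : Submodule ↥R 𝒪)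
    (hM : ∀ f : 𝒪, (PowerSeries.X : 𝒪)^c * f ∈ M) : M.FG := by
  let T : 𝒪 →ₗ[ℂ] (Fin c → ℂ) := LinearMap.pi fun i => PowerSeries.coeff (R := ℂ) i.1
  obtain ⟨t, ht⟩ : ((M.restrictScalars ℂ).map T).FG := IsNoetherian.noetherian _
  have hsub : (t : Set (Fin c → ℂ)) ⊆ T '' (M : Set 𝒪) := by
    intro v hv
    have : v ∈ (M.restrictScalars ℂ).map T := ht ▸ Submodule.subset_span hv
    obtain ⟨w, hw, rfl⟩ := this
    exact ⟨w, hw, rfl⟩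
  classical
  obtain ⟨S, hS, rfl⟩ := Finset.subset_set_image_iff.1 hsub
  let S2 : Finset 𝒪 := (Finset.range c).image fun i => (PowerSeries.X : 𝒪)^c * PowerSeries.X^i
  refine ⟨S ∪ S2, le_antisymm ?_ ?_⟩
  · rw [Submodule.span_le]
    intro w hw
    rcases Finset.mem_union.1 (Finset.mem_coe.1 hw) with hw | hw
    · exact hS hw
    · obtain ⟨i, -, rfl⟩ := Finset.mem_image.1 hw
      exact hM _
  · set P : Submodule ↥R 𝒪 := Submodule.span ↥R ((S ∪ S2 : Finset 𝒪) : Set 𝒪) with hP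
    have hPS : ∀ w ∈ S, w ∈ P := fun w hw => Submodule.subset_span (by simp [hw])
    have hPS2 : ∀ i < c, (PowerSeries.X : 𝒪)^c * PowerSeries.X^i ∈ P := fun i hi =>
      Submodule.subset_span (Finset.mem_coe.2 (Finset.mem_union_right _
        (Finset.mem_image.2 ⟨i, Finset.mem_range.2 hi, rfl⟩)))
    have hPs : ∀ (a : ℂ) (w : 𝒪), w ∈ P → a • w ∈ P := fun a w hw =>
      (P.restrictScalars ℂ).smul_mem a hw
    -- truncation decomposition
    have hdec : ∀ f : 𝒪, ∃ h : 𝒪, f =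
        (∑ i ∈ Finset.range c, (PowerSeries.coeff i f) • (PowerSeries.X : 𝒪)^i)
          + PowerSeries.X^c * h := by
      intro f
      have : (PowerSeries.X : 𝒪)^c ∣ f -
          (∑ i ∈ Finset.range c, (PowerSeries.coeff i f) • (PowerSeries.X : 𝒪)^i) := by
        rw [PowerSeries.X_pow_dvd_iff]
        intro k hk
        simp [PowerSeries.coeff_X_pow, hk]
      obtain ⟨h, hh⟩ := this
      exact ⟨h, by rw [← hh]; ring⟩
    have hXP : ∀ f : 𝒪, (PowerSeries.X : 𝒪)^c * f ∈ P := by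
      intro f
      obtain ⟨h, hh⟩ := hdec f
      rw [hh, mul_add, Finset.mul_sum]
      refine add_mem (sum_mem fun i hi => ?_) ?_
      · rw [mul_smul_comm]
        exact hPs _ _ (hPS2 i (Finset.mem_range.1 hi))
      · have := P.smul_mem ⟨_, hc h⟩ (hPS2 0 h0)
        rw [Subalgebra.smul_def] at this
        convert this using 1
        simp only [smul_eq_mul, pow_zero]
        ring
    intro w hw
    have h1 : T w ∈ (P.restrictScalars ℂ).map T := by
      have : T w ∈ (M.restrictScalars ℂ).map T := ⟨w, hw, rfl⟩
      rw [← ht] at this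
      refine Submodule.span_le.2 ?_ this
      intro v hv
      obtain ⟨s, hs, rfl⟩ := Finset.mem_image.1 (Finset.mem_coe.1 hv)
      exact ⟨s, hPS s hs, rfl⟩
    obtain ⟨p, hp, hpw⟩ := h1
    have hp : p ∈ P := hp
    have : (PowerSeries.X : 𝒪)^c ∣ w - p := by
      rw [PowerSeries.X_pow_dvd_iff]
      intro k hk
      have := congrFun hpw ⟨k, hk⟩
      simp only [T, LinearMap.pi_apply] at this
      simp [this]
    obtain ⟨q, hq⟩ := this
    have : w = p + PowerSeries.X^c * q := by rw [← hq]; ring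
    rw [this]
    exact add_mem hp (hXP q)

lemma contains_of_unit (R : Subalgebra ℂ 𝒪) (c : ℕ)
    (hc : ∀ f : 𝒪, (PowerSeries.X : 𝒪)^c * f ∈ R) (M : Submodule ↥R 𝒪)
    (hM : ∃ x ∈ M, x ≠ (0:𝒪) ∧ ord x = 0) (f : 𝒪) : (PowerSeries.X : 𝒪)^c * f ∈ M := by
  obtain ⟨x, hx, hx0, hxo⟩ := hM
  have h := ord_spec x hx0
  rw [hxo, PowerSeries.coeff_zero_eq_constantCoeff] at h
  have := M.smul_mem ⟨_, hc (f * x⁻¹)⟩ hx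
  rw [Subalgebra.smul_def] at this
  convert this using 1
  simp only [smul_eq_mul]
  rw [mul_assoc, mul_assoc, PowerSeries.inv_mul_cancel x h, mul_one]

/-- Cutting down by functionals vanishing on `𝔪𝓜`. -/
def cutM (R : Subalgebra ℂ 𝒪) (M : Submodule ↥R 𝒪) (I : Set ℕ) (φ : ℕ → 𝒪 →ₗ[ℂ] ℂ)
    (hφ : ∀ j ∈ I, ∀ x ∈ mSmul R M, φ j x = 0) : Submodule ↥R 𝒪 where
  carrier := {x | x ∈ M ∧ ∀ j ∈ I, φ j x = 0}
  zero_mem' := ⟨zero_mem _, fun j _ => map_zero _⟩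
  add_mem' := by
    rintro x y ⟨hx, hx'⟩ ⟨hy, hy'⟩
    exact ⟨add_mem hx hy, fun j hj => by rw [map_add, hx' j hj, hy' j hj, add_zero]⟩
  smul_mem' := by
    rintro ⟨r, hr⟩ x ⟨hx, hx'⟩
    refine ⟨M.smul_mem _ hx, fun j hj => ?_⟩
    set r0 := PowerSeries.coeff 0 r with hr0
    have hmem : (r - algebraMap ℂ 𝒪 r0) * x ∈ mSmul R M := by
      refine Submodule.subset_span ⟨_, sub_mem hr (R.algebraMap_mem r0), x, hx, ?_, rfl⟩
      by_cases h0 : r - algebraMap ℂ 𝒪 r0 = 0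
      · exact Or.inl h0
      · right
        rcases Nat.eq_zero_or_pos (ord (r - algebraMap ℂ 𝒪 r0)) with h | h
        · exfalso
          have := ord_spec _ h0
          rw [h] at this
          apply this
          simp [hr0, PowerSeries.algebraMap_apply]
        · exact h
    have h1 : (⟨r, hr⟩ : ↥R) • x = r0 • x + (r - algebraMap ℂ 𝒪 r0) * x := by
      rw [Subalgebra.smul_def, Algebra.smul_def r0 x, smul_eq_mul]
      ring
    rw [h1, map_add, map_smul, hx' j hj, hφ j hj _ hmem]
    simp

/-- One step of the construction. -/
lemma delta_step (R : Subalgebra ℂ 𝒪) (M M' : Submodule ↥R 𝒪) (n : ℕ) (φ : 𝒪 →ₗ[ℂ] ℂ)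
    (h1 : ∀ x ∈ M, (∀ k < n + 1, PowerSeries.coeff k x = 0) → φ x = 0)
    (h2 : ∀ x ∈ M, x ≠ 0 → ord x = n → φ x ≠ 0)
    (hM' : ∀ x, x ∈ M' ↔ x ∈ M ∧ φ x = 0) (hn : n ∈ DeltaM R M) :
    DeltaM R M' = DeltaM R M \ {n} := by
  ext d
  constructor
  · rintro ⟨x, hx, hx0, hd⟩
    obtain ⟨hxM, hφ⟩ := (hM' x).1 hx
    refine ⟨⟨x, hxM, hx0, hd⟩, ?_⟩
    rintro rfl
    exact h2 x hxM hx0 hd hφ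
  · rintro ⟨⟨x, hx, hx0, hd⟩, hdn⟩
    rcases lt_or_gt_of_ne (show d ≠ n from hdn) with h | h
    · obtain ⟨e, he, he0, hen⟩ := hn
      have hφe := h2 e he he0 hen
      have hes : (φ x / φ e) • e ∈ M := (M.restrictScalars ℂ).smul_mem _ he
      refine ⟨x - (φ x / φ e) • e, (hM' _).2 ⟨sub_mem hx hes, ?_⟩, ord_eq _ _ ?_ ?_⟩
      · simp [hφe]
      · have := ord_lt e d (hen ▸ h)
        simpa [this] using hd ▸ ord_spec x hx0
      · intro k hk
        simp [ord_lt e k (hen ▸ hk.trans h), ord_lt x k (hd ▸ hk)]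
    · exact ⟨x, (hM' x).2 ⟨hx, h1 x hx fun k hk => ord_lt x k (by omega)⟩, hx0, hd⟩

/-- If `𝓜_top` is a standard module with `D_{𝓜_top} = D_m` and
`dim_ℂ(𝓜̄^{(g_i)}/𝓜̄^{(g_i+1)}) = 1` for all `1 ≤ i ≤ m`, then `𝓜_top` extends
to a flag of standard modules realizing the `D`-flag; in particular the
`D`-flag is admissible. -/
theorem statement7 (R : Subalgebra ℂ 𝒪) (c : ℕ) (hR : HasConductor R c)
    (m : ℕ) (D0 : Set ℕ) (g : ℕ → ℕ) (hflag : IsDFlag R m D0 g)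
    (Mtop : Submodule ↥R 𝒪) (hstd : IsStd R Mtop)
    (hDm : Dset R Mtop = DFlagSet D0 g m)
    (hdim : ∀ i, 1 ≤ i → i ≤ m →
      quotDim (((Mtop.restrictScalars ℂ) ⊓ zO (g i)) ⊔ mSmul R Mtop)
              (((Mtop.restrictScalars ℂ) ⊓ zO (g i + 1)) ⊔ mSmul R Mtop) = 1) :
    (∃ MM : ℕ → Submodule ↥R 𝒪,
      (∀ i, i < m → MM i ≤ MM (i+1)) ∧ MM m = Mtop ∧
      ∀ i ≤ m, IsStd R (MM i) ∧ Dset R (MM i) = DFlagSet D0 g i) ∧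
    IsAdmissibleFlag R m D0 g := by
  suffices H : ∃ MM : ℕ → Submodule ↥R 𝒪,
      (∀ i, i < m → MM i ≤ MM (i+1)) ∧ MM m = Mtop ∧
      ∀ i ≤ m, IsStd R (MM i) ∧ Dset R (MM i) = DFlagSet D0 g i by
    refine ⟨H, ?_⟩
    obtain ⟨MM, h1, -, h3⟩ := H
    exact ⟨MM, h1, h3⟩
  obtain ⟨hc1, hc, -⟩ := hR
  obtain ⟨hD0, hmono, hg, -⟩ := hflag
  have hfun := fun i (h1 : 1 ≤ i) (h2 : i ≤ m) => exists_functional R Mtop (g i) (hdim i h1 h2)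
  choose! φ hφ1 hφ2 hφ3 using hfun
  have hI : ∀ i, ∀ j ∈ Set.Ioc i m, ∀ x ∈ mSmul R Mtop, φ j x = 0 := fun i j hj =>
    hφ1 j (by have := hj.1; omega) hj.2
  let MM : ℕ → Submodule ↥R 𝒪 := fun i => cutM R Mtop (Set.Ioc i m) φ (hI i)
  have hMM : ∀ i x, x ∈ MM i ↔ x ∈ Mtop ∧ ∀ j ∈ Set.Ioc i m, φ j x = 0 := fun i x => Iff.rfl
  have htop : MM m = Mtop := by
    ext x
    rw [hMM]
    simp
  have hstep : ∀ i, i < m → ∀ x, x ∈ MM i ↔ x ∈ MM (i+1) ∧ φ (i+1) x = 0 := by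
    intro i hi x
    rw [hMM, hMM]
    constructor
    · rintro ⟨h, h'⟩
      exact ⟨⟨h, fun j hj => h' j ⟨by have := hj.1; omega, hj.2⟩⟩, h' _ ⟨by omega, hi⟩⟩
    · rintro ⟨⟨h, h'⟩, h''⟩
      refine ⟨h, fun j hj => ?_⟩
      rcases Nat.eq_or_lt_of_le (Nat.succ_le_of_lt hj.1) with h3 | h3
      · have h3 : i + 1 = j := h3
        rw [← h3]; exact h''
      · exact h' j ⟨h3, hj.2⟩
  refine ⟨MM, fun i hi x hx => ((hstep i hi x).1 hx).1, htop, ?_⟩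
  have main : ∀ k, k ≤ m → (0 ∈ DeltaM R (MM (m - k))) ∧
      Dset R (MM (m - k)) = DFlagSet D0 g (m - k) := by
    intro k
    induction k with
    | zero =>
      intro _
      rw [Nat.sub_zero, htop]
      exact ⟨hstd.2, hDm⟩
    | succ k ih =>
      intro hk
      obtain ⟨ih0, ihD⟩ := ih (by omega)
      obtain ⟨i, hi⟩ : ∃ i, i = m - (k+1) := ⟨_, rfl⟩
      have hi1 : m - k = i + 1 := by omega
      have him : i < m := by omega
      rw [← hi]
      rw [hi1] at ih0 ihD
      have hgi := hg (i+1) (by omega) (by omega)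
      have hle : ∀ x, x ∈ MM (i+1) → x ∈ Mtop := fun x hx => ((hMM _ x).1 hx).1
      have hgmem : g (i+1) ∈ DeltaM R (MM (i+1)) := by
        have : g (i+1) ∈ Dset R (MM (i+1)) := by
          rw [ihD]
          exact Or.inr ⟨i+1, ⟨by omega, le_rfl⟩, rfl⟩
        exact this.1
      have hΔ := delta_step R (MM (i+1)) (MM i) (g (i+1)) (φ (i+1))
        (fun x hx => hφ2 (i+1) (by omega) (by omega) x (hle x hx))
        (fun x hx => hφ3 (i+1) (by omega) (by omega) x (hle x hx)) (hstep i him) hgmem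
      have hg0 : g (i+1) ≠ 0 := by
        intro h0
        apply hgi.1
        rw [h0]
        exact ⟨1, one_mem R, ord_eq 1 0 (by simp) (by simp)⟩
      refine ⟨?_, ?_⟩
      · rw [hΔ]
        exact ⟨ih0, fun h => hg0 h.symm⟩
      · have hD : Dset R (MM i) = DFlagSet D0 g (i+1) \ {g (i+1)} := by
          rw [← ihD, Dset, Dset, hΔ]
          ext d
          simp only [Set.mem_inter_iff, Set.mem_diff]
          tauto
        rw [hD]
        ext d
        constructor
        · rintro ⟨h | ⟨j, hj, rfl⟩, hd⟩
          · exact Or.inl h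
          · refine Or.inr ⟨j, ⟨hj.1, ?_⟩, rfl⟩
            have : j ≠ i + 1 := by
              rintro rfl
              exact hd rfl
            have := hj.2
            omega
        · rintro (h | ⟨j, hj, rfl⟩)
          · refine ⟨Or.inl h, ?_⟩
            rintro rfl
            exact hgi.2 h
          · have hj1 := hj.1
            have hj2 := hj.2
            refine ⟨Or.inr ⟨j, ⟨hj1, by omega⟩, rfl⟩, ?_⟩
            have : g j < g (i+1) := hmono ⟨hj1, by omega⟩ ⟨by omega, by omega⟩ (by omega)
            exact fun h => this.ne h
  intro i hi
  have := main (m - i) (by omega)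
  rw [show m - (m - i) = i by omega] at this
  exact ⟨⟨fg_of_contains R c hc1 hc _ (contains_of_unit R c hc _ this.1), this.1⟩, this.2⟩


end
end

section
/- Let 𝒟 = (D_0,…,D_m) be a D-flag of length m with gaps g_1 < … < g_m, and let 𝓜_top be a standard module with D_{𝓜_top} = D_m satisfying dim_ℂ(𝓜̄^{(g_i)}/𝓜̄^{(g_i+1)}) = 1 for all 1 ≤ i ≤ m, where 𝓜̄ = 𝓜_top/𝔪𝓜_top and 𝓜̄^{(j)} is the image of 𝓜_top ∩ z^j𝒪 in 𝓜̄. Let 𝓜̄_0 ⊆ 𝓜̄ be any ℂ-subspace such that dim_ℂ(𝓜̄/𝓜̄_0) = m, dim_ℂ((𝓜̄_0 + 𝓜̄^{(g_i)})/(𝓜̄_0 + 𝓜̄^{(g_i+1)})) = 1 for every 1 ≤ i ≤ m, and 𝓜̄_0 is not contained in 𝓜̄^{(1)}. Then the unique ℛ-submodule 𝓜_0 with 𝔪𝓜_top ⊆ 𝓜_0 ⊆ 𝓜_top whose image in 𝓜̄ equals 𝓜̄_0 is a standard module with D_{𝓜_0} = D_0; moreover, choosing for each i an element m̄_i ∈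 𝓜̄_0 + 𝓜̄^{(g_i)} generating ((𝓜̄_0 + 𝓜̄^{(g_i)})/𝓜̄_0) modulo 𝓜̄_0 + 𝓜̄^{(g_i+1)}, the submodule 𝓜_i with 𝔪𝓜_top ⊆ 𝓜_i ⊆ 𝓜_top lifting 𝓜̄_0 ⊕ ℂm̄_1 ⊕ … ⊕ ℂm̄_i is a standard module with D_{𝓜_i} = D_i. -/
open PowerSeries

noncomputable section

theorem mem_zO_iff (j : ℕ) (f : 𝒪) : f ∈ zO j ↔ ∀ k < j, PowerSeries.coeff k f = 0 := by
  rw [← PowerSeries.X_pow_dvd_iff]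
  constructor
  · rintro ⟨h, rfl⟩
    exact ⟨h, rfl⟩
  · rintro ⟨h, rfl⟩
    exact ⟨h, rfl⟩

theorem ord_iff (n : ℕ) (f : 𝒪) :
    (f ≠ 0 ∧ ord f = n) ↔ (PowerSeries.coeff n f ≠ 0 ∧ f ∈ zO n) := by
  rw [mem_zO_iff]
  constructor
  · rintro ⟨hf, rfl⟩
    have hne : {n : ℕ | PowerSeries.coeff n f ≠ 0}.Nonempty := by
      by_contra h
      apply hf
      ext k
      by_contra hk
      exact h ⟨k, hk⟩
    refine ⟨Nat.sInf_mem hne, fun k hk => ?_⟩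
    by_contra h
    exact Nat.notMem_of_lt_sInf hk h
  · rintro ⟨h1, h2⟩
    refine ⟨fun h => h1 (by simp [h]), le_antisymm (Nat.sInf_le h1) ?_⟩
    refine le_csInf ⟨n, h1⟩ fun k hk => ?_
    by_contra hlt
    exact hk (h2 k (by omega))

theorem zO_mono {a b : ℕ} (h : a ≤ b) : zO b ≤ zO a := by
  intro f hf
  rw [mem_zO_iff] at *
  exact fun k hk => hf k (by omega)

theorem mem_zO_succ {n : ℕ} {f : 𝒪} (hf : f ∈ zO n) (h0 : PowerSeries.coeff n f = 0) :
    f ∈ zO (n+1) := by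
  rw [mem_zO_iff] at *
  intro k hk
  rcases Nat.lt_succ_iff_lt_or_eq.mp hk with h | rfl
  · exact hf k h
  · exact h0

theorem zero_or_ord_pos {r : 𝒪} (h : PowerSeries.coeff 0 r = 0) : r = 0 ∨ 0 < ord r := by
  by_cases hr : r = 0
  · exact Or.inl hr
  · right
    by_contra hn
    exact ((ord_iff 0 r).1 ⟨hr, by omega⟩).1 h

/-- `z^c 𝒪 = (z^c 𝒪) x` for a unit `x`. -/
theorem factor_unit {c : ℕ} {x f : 𝒪} (hx : PowerSeries.coeff 0 x ≠ 0) (hf : f ∈ zO c) :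
    ∃ h : 𝒪, f = ((PowerSeries.X : 𝒪)^c * h) * x := by
  obtain ⟨h, rfl⟩ := hf
  refine ⟨h * x⁻¹, ?_⟩
  have := PowerSeries.mul_inv_cancel x (by simpa using hx)
  change (PowerSeries.X : 𝒪)^c * h = _
  linear_combination (-(PowerSeries.X : 𝒪)^c * h) * this

theorem zO_le_mSmul {R : Subalgebra ℂ 𝒪} {c : ℕ} (hR : HasConductor R c)
    {M : Submodule ↥R 𝒪} (hM : IsStd R M) : zO c ≤ mSmul R M := by
  obtain ⟨x, hxM, hx⟩ := hM.2
  have hx0 := ((ord_iff 0 x).1 hx).1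
  intro f hf
  obtain ⟨h, rfl⟩ := factor_unit hx0 hf
  refine Submodule.subset_span ⟨_, hR.2.1 h, x, hxM, zero_or_ord_pos ?_, rfl⟩
  have : (PowerSeries.X : 𝒪)^c * h ∈ zO c := ⟨h, rfl⟩
  exact (mem_zO_iff _ _).1 this 0 hR.1

theorem mSmul_le_zO (R : Subalgebra ℂ 𝒪) (M : Submodule ↥R 𝒪) : mSmul R M ≤ zO 1 := by
  refine Submodule.span_le.2 ?_
  rintro _ ⟨r, hr, y, hy, h, rfl⟩
  rw [SetLike.mem_coe, mem_zO_iff]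
  intro k hk
  obtain rfl : k = 0 := by omega
  have : PowerSeries.coeff 0 r = 0 := by
    rcases h with rfl | h
    · simp
    · by_contra h0
      have := ((ord_iff 0 r).2 ⟨h0, by rw [mem_zO_iff]; omega⟩).2
      omega
  simp at this
  simp [this]

/-- First `c` coefficients. -/
def truncMap (c : ℕ) : 𝒪 →ₗ[ℂ] (Fin c → ℂ) :=
  LinearMap.pi fun k => PowerSeries.coeff (R := ℂ) (k : ℕ)

theorem truncMap_ker {c : ℕ} {f : 𝒪} (h : truncMap c f = 0) : f ∈ zO c := by
  rw [mem_zO_iff]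
  intro k hk
  exact congrFun h ⟨k, hk⟩

theorem fg_of_unit {R : Subalgebra ℂ 𝒪} {c : ℕ} (hR : HasConductor R c)
    (N : Submodule ↥R 𝒪) {x : 𝒪} (hxN : x ∈ N) (hx : PowerSeries.coeff 0 x ≠ 0) : N.FG := by
  let b := Module.finBasis ℂ ((N.restrictScalars ℂ).map (truncMap c))
  have hp : ∀ i, ∃ p ∈ N, truncMap c p = b i := by
    intro i
    obtain ⟨p, hp, h⟩ := (b i).2
    exact ⟨p, hp, h⟩
  choose p hpN hp using hp
  refine Submodule.fg_def.2 ⟨insert x (Set.range p), (Set.finite_range p).insert x, ?_⟩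
  apply le_antisymm
  · refine Submodule.span_le.2 ?_
    rintro y (rfl | ⟨i, rfl⟩)
    · exact hxN
    · exact hpN i
  · intro u hu
    let u' : (N.restrictScalars ℂ).map (truncMap c) :=
      ⟨truncMap c u, Submodule.mem_map_of_mem (p := N.restrictScalars ℂ) hu⟩
    let S := Submodule.span ↥R (insert x (Set.range p))
    let s : 𝒪 := ∑ i, b.repr u' i • p i
    have hsS : s ∈ S.restrictScalars ℂ := by
      refine Submodule.sum_mem _ fun i _ => Submodule.smul_mem _ _ ?_
      exact Submodule.subset_span (Or.inr ⟨i, rfl⟩)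
    have hk : truncMap c (u - s) = 0 := by
      have h1 := congrArg Subtype.val (b.sum_repr u')
      simp only [Submodule.coe_sum, Submodule.coe_smul] at h1
      simp only [s, map_sub, map_sum, map_smul, hp]
      rw [h1, sub_self]
    obtain ⟨h, hh⟩ := factor_unit hx (truncMap_ker hk)
    have hx' : u - s ∈ S := by
      rw [hh]
      exact S.smul_mem (⟨_, hR.2.1 h⟩ : R) (Submodule.subset_span (Or.inl rfl))
    have := S.add_mem hx' hsS
    simpa using this

theorem smul_closed {R : Subalgebra ℂ 𝒪} {M : Submodule ↥R 𝒪} {W : Submodule ℂ 𝒪}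
    (h1 : mSmul R M ≤ W) (h2 : W ≤ M.restrictScalars ℂ) (r : 𝒪) (hr : r ∈ R) (w : 𝒪)
    (hw : w ∈ W) : r * w ∈ W := by
  let a : ℂ := PowerSeries.coeff 0 r
  have e : r * w = a • w + (r - algebraMap ℂ 𝒪 a) * w := by
    rw [Algebra.smul_def]; ring
  rw [e]
  refine W.add_mem (W.smul_mem _ hw) (h1 (Submodule.subset_span
    ⟨_, R.sub_mem hr (R.algebraMap_mem a), w, h2 hw, zero_or_ord_pos ?_, rfl⟩))
  simp [a]

/-- lift a `ℂ`-subspace between `𝔪M` and `M` to an `R`-module. -/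
def liftMod {R : Subalgebra ℂ 𝒪} {M : Submodule ↥R 𝒪} {W : Submodule ℂ 𝒪}
    (h1 : mSmul R M ≤ W) (h2 : W ≤ M.restrictScalars ℂ) : Submodule ↥R 𝒪 where
  carrier := W
  add_mem' := W.add_mem
  zero_mem' := W.zero_mem
  smul_mem' r w hw := smul_closed h1 h2 r.1 r.2 w hw

/-- triangularity -/
theorem coeffs_zero (F : ℕ → Submodule ℂ 𝒪) (hF : ∀ a b, a ≤ b → F b ≤ F a)
    (V : Submodule ℂ 𝒪) (m : ℕ) (g : ℕ → ℕ) (hg : StrictMonoOn g (Set.Icc 1 m))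
    (w : ℕ → 𝒪) (hw1 : ∀ i ∈ Set.Icc 1 m, w i ∈ F (g i))
    (hw2 : ∀ i ∈ Set.Icc 1 m, w i ∉ V ⊔ F (g i + 1)) (i : ℕ) (hi : i ≤ m)
    (a : ℕ → ℂ) (n : ℕ) (h : ∑ j ∈ Finset.Icc 1 i, a j • w j ∈ V ⊔ F n) :
    ∀ j ∈ Finset.Icc 1 i, g j < n → a j = 0 := by
  intro j
  induction j using Nat.strong_induction_on with
  | _ j ih =>
    intro hj hjn
    by_contra haj
    have hj' := Finset.mem_Icc.1 hj
    have hjm : j ∈ Set.Icc 1 m := ⟨hj'.1, by omega⟩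
    apply hw2 j hjm
    rw [← Finset.add_sum_erase _ _ hj] at h
    have hle : V ⊔ F n ≤ V ⊔ F (g j + 1) := sup_le_sup_left (hF _ _ hjn) V
    have h2 : ∑ k ∈ (Finset.Icc 1 i).erase j, a k • w k ∈ V ⊔ F (g j + 1) := by
      refine Submodule.sum_mem _ fun k hk => ?_
      obtain ⟨hkj, hk⟩ := Finset.mem_erase.1 hk
      have hk' := Finset.mem_Icc.1 hk
      have hkm : k ∈ Set.Icc 1 m := ⟨hk'.1, by omega⟩
      rcases lt_or_gt_of_ne hkj with hlt | hlt
      · rw [ih k hlt hk ((hg hkm hjm hlt).trans hjn), zero_smul]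
        exact Submodule.zero_mem _
      · exact Submodule.smul_mem _ _ (Submodule.mem_sup_right (hF _ _ (hg hjm hkm hlt) (hw1 k hkm)))
    have h3 := Submodule.sub_mem _ (hle h) h2
    rw [add_sub_cancel_right] at h3
    exact (Submodule.smul_mem_iff _ haj).1 h3

theorem mem_sup_span_iff (V : Submodule ℂ 𝒪) (w : ℕ → 𝒪) (i : ℕ) (u : 𝒪) :
    u ∈ V ⊔ Submodule.span ℂ (w '' (Finset.Icc 1 i : Finset ℕ)) ↔
      ∃ v ∈ V, ∃ a : ℕ → ℂ, u = v + ∑ j ∈ Finset.Icc 1 i, a j • w j := by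
  rw [Submodule.mem_sup]
  constructor
  · rintro ⟨v, hv, s, hs, rfl⟩
    obtain ⟨a, rfl⟩ := (Submodule.mem_span_image_finset_iff_exists_fun' ℂ).1 hs
    exact ⟨v, hv, a, rfl⟩
  · rintro ⟨v, hv, a, rfl⟩
    exact ⟨v, hv, _, (Submodule.mem_span_image_finset_iff_exists_fun' ℂ).2 ⟨a, rfl⟩, rfl⟩

theorem top_decomp {c : ℕ} (M V : Submodule ℂ 𝒪) (hzV : zO c ≤ V)
    (m : ℕ) (hdim : quotDim M V = m)
    (w : ℕ → 𝒪) (hwM : ∀ i ∈ Set.Icc 1 m, w i ∈ M)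
    (hind : ∀ a : ℕ → ℂ, ∑ j ∈ Finset.Icc 1 m, a j • w j ∈ V → ∀ j ∈ Finset.Icc 1 m, a j = 0)
    (u : 𝒪) (hu : u ∈ M) :
    ∃ v ∈ V, ∃ a : ℕ → ℂ, u = v + ∑ j ∈ Finset.Icc 1 m, a j • w j := by
  let Q := ↥M ⧸ Submodule.comap M.subtype V
  have hker : LinearMap.ker ((truncMap c).comp M.subtype) ≤ Submodule.comap M.subtype V := by
    intro y hy
    exact hzV (truncMap_ker hy)
  have : Module.Finite ℂ (↥M ⧸ LinearMap.ker ((truncMap c).comp M.subtype)) :=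
    Module.Finite.equiv ((truncMap c).comp M.subtype).quotKerEquivRange.symm
  have : Module.Finite ℂ Q :=
    Module.Finite.of_surjective (Submodule.factor hker) (Submodule.factor_surjective hker)
  let b : ↥(Finset.Icc 1 m) → Q := fun j =>
    Submodule.Quotient.mk ⟨w j, hwM j (Finset.mem_Icc.1 j.2)⟩
  have hli : LinearIndependent ℂ b := by
    rw [Fintype.linearIndependent_iff]
    intro a ha j
    let a' : ℕ → ℂ := fun k => if h : k ∈ Finset.Icc 1 m then a ⟨k, h⟩ else 0
    have haa : ∀ j : ↥(Finset.Icc 1 m), a' j = a j := fun j => by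
      simp only [a', j.2, dif_pos]
    have h0 : Submodule.Quotient.mk (p := Submodule.comap M.subtype V)
        (∑ j : ↥(Finset.Icc 1 m), a j • (⟨w j, hwM j (Finset.mem_Icc.1 j.2)⟩ : M)) = 0 := by
      rw [← ha, ← Submodule.mkQ_apply, map_sum]
      rfl
    rw [Submodule.Quotient.mk_eq_zero] at h0
    have h1 : ∑ j ∈ Finset.Icc 1 m, a' j • w j ∈ V := by
      rw [← Finset.sum_coe_sort]
      simpa [haa] using h0
    rw [← haa]
    exact hind a' h1 j j.2
  have hspan := hli.span_eq_top_of_card_eq_finrank' (by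
    rw [Fintype.card_coe, Nat.card_Icc]
    exact (by omega : m + 1 - 1 = m).trans hdim.symm)
  have hmem : (Submodule.Quotient.mk ⟨u, hu⟩ : Q) ∈ Submodule.span ℂ (Set.range b) := by
    rw [hspan]; trivial
  obtain ⟨a, ha⟩ := (Submodule.mem_span_range_iff_exists_fun ℂ).1 hmem
  have h0 : Submodule.Quotient.mk (p := Submodule.comap M.subtype V)
      ((⟨u, hu⟩ : M) - ∑ j : ↥(Finset.Icc 1 m), a j • (⟨w j, hwM j (Finset.mem_Icc.1 j.2)⟩ : M)) = 0 := by
    rw [← Submodule.mkQ_apply, map_sub, map_sum, sub_eq_zero]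
    exact ha.symm
  rw [Submodule.Quotient.mk_eq_zero] at h0
  let a' : ℕ → ℂ := fun k => if h : k ∈ Finset.Icc 1 m then a ⟨k, h⟩ else 0
  have haa : ∀ j : ↥(Finset.Icc 1 m), a' j = a j := fun j => by
    simp only [a', j.2, dif_pos]
  refine ⟨u - ∑ j ∈ Finset.Icc 1 m, a' j • w j, ?_, a', by ring⟩
  rw [← Finset.sum_coe_sort]
  simpa [haa] using h0

/-- Detailed lifting statement: given `𝓜_top` realizing `D_m` with the
one-dimensionality conditions, and a lift `V` of a subspace `𝓜̄_0 ⊆ 𝓜̄` of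
codimension `m` satisfying the stated conditions (with `𝔪𝓜_top ⊆ V ⊆ 𝓜_top`),
the module with carrier `V` is a standard module with `D`-set `D_0`, and for
any choices `m_i` generating `(𝓜̄_0+𝓜̄^{(g_i)})/𝓜̄_0` modulo `𝓜̄_0+𝓜̄^{(g_i+1)}`,
the lift of `𝓜̄_0 ⊕ ℂm̄_1 ⊕ … ⊕ ℂm̄_i` is a standard module with `D`-set `D_i`. -/
theorem statement8 (R : Subalgebra ℂ 𝒪) (c : ℕ) (hR : HasConductor R c)
    (m : ℕ) (D0 : Set ℕ) (g : ℕ → ℕ) (hflag : IsDFlag R m D0 g)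
    (Mtop : Submodule ↥R 𝒪) (hstd : IsStd R Mtop)
    (hDm : Dset R Mtop = DFlagSet D0 g m)
    (hdim : ∀ i, 1 ≤ i → i ≤ m →
      quotDim (((Mtop.restrictScalars ℂ) ⊓ zO (g i)) ⊔ mSmul R Mtop)
              (((Mtop.restrictScalars ℂ) ⊓ zO (g i + 1)) ⊔ mSmul R Mtop) = 1)
    (V : Submodule ℂ 𝒪)
    (hV1 : mSmul R Mtop ≤ V) (hV2 : V ≤ Mtop.restrictScalars ℂ)
    (hVdim : quotDim (Mtop.restrictScalars ℂ) V = m)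
    (hVdim2 : ∀ i, 1 ≤ i → i ≤ m →
      quotDim (V ⊔ ((Mtop.restrictScalars ℂ) ⊓ zO (g i)))
              (V ⊔ ((Mtop.restrictScalars ℂ) ⊓ zO (g i + 1))) = 1)
    (hVnot : ¬ V ≤ ((Mtop.restrictScalars ℂ) ⊓ zO 1) ⊔ mSmul R Mtop)
    (mi : ℕ → 𝒪)
    (hmi1 : ∀ i, 1 ≤ i → i ≤ m → mi i ∈ V ⊔ ((Mtop.restrictScalars ℂ) ⊓ zO (g i)))
    (hmi2 : ∀ i, 1 ≤ i → i ≤ m → mi i ∉ V ⊔ ((Mtop.restrictScalars ℂ) ⊓ zO (g i + 1))) :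
    (∃ M0 : Submodule ↥R 𝒪, (M0 : Set 𝒪) = (V : Set 𝒪) ∧
      IsStd R M0 ∧ Dset R M0 = D0) ∧
    ∀ i ≤ m, ∃ Mi : Submodule ↥R 𝒪,
      (Mi : Set 𝒪) = ((V ⊔ ⨆ j ∈ Set.Icc 1 i, (ℂ ∙ mi j) : Submodule ℂ 𝒪) : Set 𝒪) ∧
      IsStd R Mi ∧ Dset R Mi = DFlagSet D0 g i := by
  obtain ⟨hD0, hg, hgG, -⟩ := hflag
  set M : Submodule ℂ 𝒪 := Mtop.restrictScalars ℂ with hMdef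
  have hex : ∀ i, ∃ w : 𝒪, i ∈ Set.Icc 1 m →
      (w ∈ M ⊓ zO (g i) ∧ mi i - w ∈ V ∧ w ∉ V ⊔ (M ⊓ zO (g i + 1))) := by
    intro i
    by_cases hi : i ∈ Set.Icc 1 m
    · obtain ⟨v, hv, w, hw, e⟩ := Submodule.mem_sup.1 (hmi1 i hi.1 hi.2)
      refine ⟨w, fun _ => ⟨hw, ?_, fun hc => hmi2 i hi.1 hi.2 ?_⟩⟩
      · rw [← e, add_sub_cancel_right]; exact hv
      · rw [← e]
        exact Submodule.add_mem _ (Submodule.mem_sup_left hv) hc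
    · exact ⟨0, fun h => absurd h hi⟩
  choose w hw using hex
  have hF : ∀ a b, a ≤ b → M ⊓ zO b ≤ M ⊓ zO a := fun a b h => inf_le_inf_left _ (zO_mono h)
  have hzV : zO c ≤ V := (zO_le_mSmul hR hstd).trans hV1
  have key := coeffs_zero (fun n => M ⊓ zO n) hF V m g hg w (fun i hi => (hw i hi).1)
    (fun i hi => (hw i hi).2.2)
  have hdec := top_decomp M V hzV m hVdim w (fun i hi => (hw i hi).1.1) (by
    intro a ha j hj
    exact key m le_rfl a (g j + 1) (Submodule.mem_sup_left ha) j hj (Nat.lt_succ_self _))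
  have hVi : ∀ i ≤ m, (V ⊔ ⨆ j ∈ Set.Icc 1 i, (ℂ ∙ mi j) : Submodule ℂ 𝒪) =
      V ⊔ Submodule.span ℂ (w '' (Finset.Icc 1 i : Finset ℕ)) := by
    intro i hi
    apply le_antisymm
    · refine sup_le le_sup_left (iSup₂_le fun j hj => ?_)
      rw [Submodule.span_singleton_le_iff_mem]
      have hjm : j ∈ Set.Icc 1 m := ⟨hj.1, hj.2.trans hi⟩
      have := Submodule.add_mem_sup (hw j hjm).2.1 (Submodule.subset_span (R := ℂ)
        (Set.mem_image_of_mem w (show j ∈ ((Finset.Icc 1 i : Finset ℕ) : Set ℕ) by simpa using hj)))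
      simpa using this
    · refine sup_le le_sup_left (Submodule.span_le.2 ?_)
      rintro _ ⟨j, hj, rfl⟩
      have hj : j ∈ Set.Icc 1 i := by simpa using hj
      have hjm : j ∈ Set.Icc 1 m := ⟨hj.1, hj.2.trans hi⟩
      have h1 : mi j ∈ (⨆ j ∈ Set.Icc 1 i, (ℂ ∙ mi j) : Submodule ℂ 𝒪) :=
        (le_iSup₂_of_le (f := fun j (_ : j ∈ Set.Icc 1 i) => (ℂ ∙ mi j)) j hj le_rfl)
          (Submodule.mem_span_singleton_self _)
      have := Submodule.sub_mem _ (Submodule.mem_sup_right (S := V) h1)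
        (Submodule.mem_sup_left (hw j hjm).2.1)
      rw [sub_sub_cancel] at this
      exact this
  -- a unit in `V`
  obtain ⟨x, hxV, hx⟩ := Set.not_subset.1 hVnot
  have hx0 : PowerSeries.coeff 0 x ≠ 0 := by
    intro h0
    exact hx (Submodule.mem_sup_left ⟨hV2 hxV, mem_zO_succ (by rw [mem_zO_iff]; omega) h0⟩)
  -- no element of `V` has order `g k`
  have hVg : ∀ k ∈ Set.Icc 1 m, ∀ v ∈ V, v ∈ zO (g k) → PowerSeries.coeff (g k) v = 0 := by
    intro k hk v hv hvz
    by_contra hne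
    obtain ⟨hwk, -, hwk2⟩ := hw k hk
    let a : ℂ := PowerSeries.coeff (g k) (w k) / PowerSeries.coeff (g k) v
    apply hwk2
    refine Submodule.mem_sup.2 ⟨a • v, V.smul_mem _ hv, w k - a • v, ⟨?_, ?_⟩, by abel⟩
    · exact M.sub_mem hwk.1 (M.smul_mem _ (hV2 hv))
    · refine mem_zO_succ (Submodule.sub_mem _ hwk.2 (Submodule.smul_mem _ _ hvz)) ?_
      simp [a, hne]
  have hwg : ∀ k ∈ Set.Icc 1 m, PowerSeries.coeff (g k) (w k) ≠ 0 := by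
    intro k hk h0
    exact (hw k hk).2.2 (Submodule.mem_sup_right ⟨(hw k hk).1.1, mem_zO_succ (hw k hk).1.2 h0⟩)
  have main : ∀ i ≤ m, ∃ Mi : Submodule ↥R 𝒪,
      (Mi : Set 𝒪) = ((V ⊔ ⨆ j ∈ Set.Icc 1 i, (ℂ ∙ mi j) : Submodule ℂ 𝒪) : Set 𝒪) ∧
      IsStd R Mi ∧ Dset R Mi = DFlagSet D0 g i := by
    intro i hi
    rw [hVi i hi]
    set W : Submodule ℂ 𝒪 := V ⊔ Submodule.span ℂ (w '' (Finset.Icc 1 i : Finset ℕ)) with hW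
    have hVW : V ≤ W := le_sup_left
    have hWM : W ≤ M := by
      refine sup_le hV2 (Submodule.span_le.2 ?_)
      rintro _ ⟨j, hj, rfl⟩
      have hj : j ∈ Set.Icc 1 i := by simpa using hj
      exact (hw j ⟨hj.1, hj.2.trans hi⟩).1.1
    refine ⟨liftMod (hV1.trans hVW) hWM, rfl, ⟨fg_of_unit hR _ (x := x) (hVW hxV) hx0,
      x, hVW hxV, (ord_iff 0 x).2 ⟨hx0, by rw [mem_zO_iff]; omega⟩⟩, ?_⟩
    have hDel : ∀ n, n ∈ DeltaM R (liftMod (hV1.trans hVW) hWM) ↔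
        n ∈ DeltaM R Mtop ∧ ∀ k ∈ Set.Icc 1 m, g k = n → k ≤ i := by
      intro n
      constructor
      · rintro ⟨u, huW, hu⟩
        have huW : u ∈ W := huW
        refine ⟨⟨u, hWM huW, hu⟩, ?_⟩
        rintro k hk rfl
        by_contra hki
        obtain ⟨hu1, hu2⟩ := (ord_iff _ _).1 hu
        have huM := hWM huW
        obtain ⟨v, hv, a, rfl⟩ := (mem_sup_span_iff _ _ _ _).1 huW
        have ha : ∀ j ∈ Finset.Icc 1 i, a j = 0 := by
          intro j hj
          have hj' := Finset.mem_Icc.1 hj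
          refine key i hi a (g k) ?_ j hj (hg ⟨hj'.1, by omega⟩ hk (by omega))
          refine Submodule.mem_sup.2 ⟨-v, V.neg_mem hv, _, ⟨huM, hu2⟩, by abel⟩
        rw [Finset.sum_eq_zero (fun j hj => by rw [ha j hj, zero_smul]), add_zero] at hu1 hu2
        exact hu1 (hVg k hk v hv hu2)
      · rintro ⟨⟨u, huM, hu⟩, hk⟩
        by_cases hn : ∃ k ∈ Set.Icc 1 m, g k = n
        · obtain ⟨k, hkm, rfl⟩ := hn
          refine ⟨w k, ?_, (ord_iff _ _).2 ⟨hwg k hkm, (hw k hkm).1.2⟩⟩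
          refine Submodule.mem_sup_right (S := V) (Submodule.subset_span ⟨k, ?_, rfl⟩)
          have := hk k hkm rfl
          simpa using ⟨hkm.1, this⟩
        · obtain ⟨hu1, hu2⟩ := (ord_iff _ _).1 hu
          have huM' : u ∈ M := huM
          obtain ⟨v, hv, a, e⟩ := hdec u huM'
          have ha := key m le_rfl a n (by
            refine Submodule.mem_sup.2 ⟨-v, V.neg_mem hv, u, ⟨huM', hu2⟩, by rw [e]; abel⟩)
          have hs : ∑ j ∈ Finset.Icc 1 m, a j • w j ∈ zO (n+1) := by
            refine Submodule.sum_mem _ fun j hj => ?_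
            have hj' : j ∈ Set.Icc 1 m := by simpa using hj
            by_cases hlt : g j < n
            · rw [ha j hj hlt, zero_smul]; exact Submodule.zero_mem _
            · have : g j ≠ n := fun h => hn ⟨j, hj', h⟩
              exact Submodule.smul_mem _ _ (zO_mono (by omega) (hw j hj').1.2)
          have ev : v = u - ∑ j ∈ Finset.Icc 1 m, a j • w j := by rw [e]; abel
          refine ⟨v, hVW hv, (ord_iff _ _).2 ⟨?_, ?_⟩⟩
          · rw [ev, map_sub, (mem_zO_iff _ _).1 hs n (Nat.lt_succ_self n), sub_zero]
            exact hu1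
          · rw [ev]
            exact Submodule.sub_mem _ hu2 (zO_mono (Nat.le_succ n) hs)
    have hDm' : ∀ n, (n ∈ DeltaM R Mtop ∧ n ∈ Gaps R) ↔ n ∈ DFlagSet D0 g m := fun n => by
      rw [← hDm]; rfl
    ext n
    change n ∈ DeltaM R _ ∧ n ∈ Gaps R ↔ _
    rw [hDel, and_right_comm, hDm']
    constructor
    · rintro ⟨h | ⟨k, hk, rfl⟩, h2⟩
      · exact Or.inl h
      · exact Or.inr ⟨k, ⟨hk.1, h2 k hk rfl⟩, rfl⟩
    · rintro (h | ⟨k, hk, rfl⟩)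
      · exact ⟨Or.inl h, fun k hk e => absurd (e ▸ h) (hgG k hk.1 hk.2).2⟩
      · have hkm : k ∈ Set.Icc 1 m := ⟨hk.1, hk.2.trans hi⟩
        refine ⟨Or.inr ⟨k, hkm, rfl⟩, fun k' hk' e => ?_⟩
        rw [hg.injOn hk' hkm e]
        exact hk.2
  refine ⟨?_, main⟩
  obtain ⟨M0, h1, h2, h3⟩ := main 0 (Nat.zero_le m)
  refine ⟨M0, ?_, h2, ?_⟩
  · rw [h1]; simp
  · rw [h3]; simp [DFlagSet]

end
end

section
/- A D-flag 𝒟 = (D_0,…,D_m) is admissible if and only if there exist standard modules 𝓜_0 ⊆ 𝓜_m with 𝔪𝓜_m ⊆ 𝓜_0, D_{𝓜_0} = D_0 and D_{𝓜_m} = D_m. -/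
open PowerSeries

noncomputable section

/-- `x` has order exactly `n`. -/
def IsO (x : 𝒪) (n : ℕ) : Prop := PowerSeries.coeff n x ≠ 0 ∧ ∀ k < n, PowerSeries.coeff k x = 0

lemma isO_iff (x : 𝒪) (n : ℕ) : (x ≠ (0:𝒪) ∧ ord x = n) ↔ IsO x n := by
  constructor
  · rintro ⟨hx, rfl⟩
    have hne : {n : ℕ | PowerSeries.coeff n x ≠ 0}.Nonempty := by
      by_contra h
      apply hx
      ext n
      by_contra h'
      exact h ⟨n, by simpa using h'⟩
    refine ⟨Nat.sInf_mem hne, fun k hk => ?_⟩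
    by_contra h
    exact Nat.notMem_of_lt_sInf hk h
  · rintro ⟨h1, h2⟩
    refine ⟨fun h => h1 (by simp [h]), ?_⟩
    apply le_antisymm
    · exact Nat.sInf_le h1
    · by_contra h
      push Not at h
      have hm : ord x ∈ {n : ℕ | PowerSeries.coeff n x ≠ 0} := Nat.sInf_mem ⟨n, h1⟩
      exact hm (h2 _ h)

lemma isO_mul {x y : 𝒪} {a b : ℕ} (hx : IsO x a) (hy : IsO y b) : IsO (x * y) (a + b) := by
  obtain ⟨u, rfl⟩ := (PowerSeries.X_pow_dvd_iff).2 hx.2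
  obtain ⟨v, rfl⟩ := (PowerSeries.X_pow_dvd_iff).2 hy.2
  have e : (X ^ a * u * (X ^ b * v) : 𝒪) = X ^ (a + b) * (u * v) := by ring
  have hu := hx.1
  have hv := hy.1
  rw [PowerSeries.coeff_X_pow_mul'] at hu hv
  simp at hu hv
  rw [e]
  refine ⟨?_, PowerSeries.X_pow_dvd_iff.1 (dvd_mul_right _ _)⟩
  rw [PowerSeries.coeff_X_pow_mul']
  simp [hu, hv]

lemma mem_Delta {R : Subalgebra ℂ 𝒪} {M : Submodule ↥R 𝒪} {n : ℕ} :
    n ∈ DeltaM R M ↔ ∃ x ∈ M, IsO x n := by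
  simp only [DeltaM, Set.mem_ofPred_eq, isO_iff]

lemma mem_Gamma {R : Subalgebra ℂ 𝒪} {n : ℕ} :
    n ∈ SGamma R ↔ ∃ x ∈ R, IsO x n := by
  simp only [SGamma, Set.mem_ofPred_eq, isO_iff]

lemma mul_mem_M {R : Subalgebra ℂ 𝒪} {M : Submodule ↥R 𝒪} {r x : 𝒪} (hr : r ∈ R) (hx : x ∈ M) :
    r * x ∈ M := M.smul_mem ⟨r, hr⟩ hx

lemma C_mem (R : Subalgebra ℂ 𝒪) (a : ℂ) : (PowerSeries.C a : 𝒪) ∈ R :=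
  R.algebraMap_mem a

lemma Delta_eq {R : Subalgebra ℂ 𝒪} {M : Submodule ↥R 𝒪} (hM : IsStd R M) :
    DeltaM R M = SGamma R ∪ Dset R M := by
  ext n
  constructor
  · intro h
    by_cases hn : n ∈ SGamma R
    · exact Or.inl hn
    · exact Or.inr ⟨h, hn⟩
  · rintro (h | h)
    · obtain ⟨r, hr, hro⟩ := mem_Gamma.1 h
      obtain ⟨x, hx, hxo⟩ := hM.2
      have h2 : IsO (r * x) (n + 0) := isO_mul hro ((isO_iff x 0).1 hxo)
      rw [Nat.add_zero] at h2
      exact mem_Delta.2 ⟨r * x, mul_mem_M hr hx, h2⟩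
    · exact h.1

lemma cond_le {R : Subalgebra ℂ 𝒪} {M : Submodule ↥R 𝒪} (hM : IsStd R M) {c : ℕ}
    (hc : ∀ f : 𝒪, (PowerSeries.X : 𝒪)^c * f ∈ R) {y : 𝒪} (hy : X ^ c ∣ y) : y ∈ M := by
  obtain ⟨h, rfl⟩ := hy
  obtain ⟨x, hx, hxo⟩ := hM.2
  have h0 := ((isO_iff _ _).1 hxo).1
  have hinv : x⁻¹ * x = 1 := PowerSeries.inv_mul_cancel x (by simpa using h0)
  have := mul_mem_M (hc (h * x⁻¹)) hx
  have e : (X ^ c * (h * x⁻¹) * x : 𝒪) = X ^ c * h * (x⁻¹ * x) := by ring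
  rwa [e, hinv, mul_one] at this

lemma reduce {x y : 𝒪} {n : ℕ} (hx : IsO x n) (hy : X ^ n ∣ y) :
    ∃ a : ℂ, X ^ (n+1) ∣ y - PowerSeries.C a * x := by
  refine ⟨coeff n y / coeff n x, PowerSeries.X_pow_dvd_iff.2 fun k hk => ?_⟩
  rw [map_sub, PowerSeries.coeff_C_mul]
  rcases Nat.lt_succ_iff_lt_or_eq.1 hk with h | rfl
  · rw [PowerSeries.X_pow_dvd_iff.1 hy k h, hx.2 k h]; simp
  · have := hx.1
    field_simp; simp

lemma isO_or_dvd {y : 𝒪} {n : ℕ} (hy : X ^ n ∣ y) : IsO y n ∨ X ^ (n+1) ∣ y := by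
  by_cases h : coeff n y = 0
  · right
    refine PowerSeries.X_pow_dvd_iff.2 fun k hk => ?_
    rcases Nat.lt_succ_iff_lt_or_eq.1 hk with h' | rfl
    · exact PowerSeries.X_pow_dvd_iff.1 hy k h'
    · exact h
  · exact Or.inl ⟨h, PowerSeries.X_pow_dvd_iff.1 hy⟩

lemma descend (c : ℕ) (P : ℕ → Prop) (base : ∀ n, c ≤ n → P n) (step : ∀ n, P (n+1) → P n) :
    ∀ n, P n := by
  intro n
  have : ∀ d n, c ≤ n + d → P n := by
    intro d
    induction d with
    | zero => intro n h; exact base n (by omega)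
    | succ d ih => intro n h; exact step n (ih _ (by omega))
  exact this c n (by omega)

/-- Elements of order beyond the new values lie in the smaller module. -/
lemma mem_of_dvd {R : Subalgebra ℂ 𝒪} {M N : Submodule ↥R 𝒪} (hM : IsStd R M) (hMN : M ≤ N)
    {c : ℕ} (hc : ∀ f : 𝒪, (PowerSeries.X : 𝒪)^c * f ∈ R) {b : ℕ}
    (hb : ∀ n ∈ DeltaM R N, b < n → n ∈ DeltaM R M) :
    ∀ n, b < n → ∀ y ∈ N, X ^ n ∣ y → y ∈ M := by
  apply descend c
  · intro n hn _ y _ hy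
    exact cond_le hM hc ((pow_dvd_pow _ hn).trans hy)
  · intro n ih hbn y hyN hy
    rcases isO_or_dvd hy with h | h
    · obtain ⟨x, hx, hxo⟩ := mem_Delta.1 (hb n (mem_Delta.2 ⟨y, hyN, h⟩) hbn)
      obtain ⟨a, ha⟩ := reduce hxo hy
      have hax := mul_mem_M (C_mem R a) hx
      have := ih (by omega) _ (N.sub_mem hyN (hMN hax)) ha
      simpa using M.add_mem this hax
    · exact ih (by omega) y hyN h

lemma forward (R : Subalgebra ℂ 𝒪) (c : ℕ) (hc : ∀ f : 𝒪, (PowerSeries.X : 𝒪)^c * f ∈ R)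
    (m : ℕ) (D0 : Set ℕ) (g : ℕ → ℕ) (hflag : IsDFlag R m D0 g)
    (h : IsAdmissibleFlag R m D0 g) :
      ∃ M0 Mm : Submodule ↥R 𝒪, M0 ≤ Mm ∧
        mSmul R Mm ≤ M0.restrictScalars ℂ ∧
        IsStd R M0 ∧ IsStd R Mm ∧
        Dset R M0 = D0 ∧ Dset R Mm = DFlagSet D0 g m := by
  obtain ⟨MM, hmono, hMM⟩ := h
  have hle : ∀ j ≤ m, ∀ i ≤ j, MM i ≤ MM j := by
    intro j
    induction j with
    | zero => intro _ i hi; obtain rfl : i = 0 := by omega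
              exact le_rfl
    | succ j ih =>
      intro hj i hi
      rcases Nat.le_succ_iff.1 hi with h | rfl
      · exact (ih (by omega) i h).trans (hmono j (by omega))
      · exact le_rfl
  have hD : ∀ i ≤ m, DeltaM R (MM i) = SGamma R ∪ DFlagSet D0 g i := fun i hi => by
    rw [Delta_eq (hMM i hi).1, (hMM i hi).2]
  have h0 := hMM 0 (Nat.zero_le _)
  have hD0 : DFlagSet D0 g 0 = D0 := by simp [DFlagSet]
  refine ⟨MM 0, MM m, hle m le_rfl 0 (Nat.zero_le _), ?_, h0.1, (hMM m le_rfl).1,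
    by rw [h0.2, hD0], (hMM m le_rfl).2⟩
  refine Submodule.span_le.2 ?_
  rintro _ ⟨r, hr, y, hy, hr0, rfl⟩
  change r * y ∈ MM 0
  have hXr : X ∣ r := by
    rcases hr0 with rfl | h
    · exact dvd_zero _
    · by_cases hz : r = 0
      · simp [hz]
      · have := ((isO_iff r _).1 ⟨hz, rfl⟩).2 0 h
        exact PowerSeries.X_dvd_iff.2 (by simpa using this)
  suffices H : ∀ n, ∀ y ∈ MM m, X ^ n ∣ y → r * y ∈ MM 0 from H 0 y hy (by simp)
  apply descend c
  · intro n hn y _ hyd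
    exact mul_mem_M hr (cond_le h0.1 hc ((pow_dvd_pow _ hn).trans hyd))
  · intro n ih y hy hyd
    rcases isO_or_dvd hyd with ho | hd
    · have key : ∃ f ∈ MM m, IsO f n ∧ r * f ∈ MM 0 := by
        have hn : n ∈ DeltaM R (MM m) := mem_Delta.2 ⟨y, hy, ho⟩
        by_cases hn0 : n ∈ DeltaM R (MM 0)
        · obtain ⟨x, hx, hxo⟩ := mem_Delta.1 hn0
          exact ⟨x, hle m le_rfl 0 (Nat.zero_le _) hx, hxo, mul_mem_M hr hx⟩
        · rw [hD m le_rfl] at hn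
          rw [hD 0 (Nat.zero_le _), hD0] at hn0
          rcases hn with hn | hn | ⟨j, hj, rfl⟩
          · exact absurd (Or.inl hn) hn0
          · exact absurd (Or.inr hn) hn0
          · have hjm : g j ∈ DeltaM R (MM j) := by
              rw [hD j hj.2]
              exact Or.inr (Or.inr ⟨j, ⟨hj.1, le_rfl⟩, rfl⟩)
            obtain ⟨f, hf, hfo⟩ := mem_Delta.1 hjm
            refine ⟨f, hle m le_rfl j hj.2 hf, hfo, ?_⟩
            refine mem_of_dvd h0.1 (hle j hj.2 0 (Nat.zero_le _)) hc (b := g j) ?_ (g j + 1)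
              (Nat.lt_succ_self _) (r * f) (mul_mem_M hr hf) ?_
            · intro k hk hgk
              rw [hD j hj.2] at hk
              rw [hD 0 (Nat.zero_le _), hD0]
              rcases hk with hk | hk | ⟨i, hi, rfl⟩
              · exact Or.inl hk
              · exact Or.inr hk
              · have := hflag.2.1.monotoneOn (a := i) (b := j) ⟨hi.1, hi.2.trans hj.2⟩ hj hi.2
                omega
            · rw [pow_succ']
              exact mul_dvd_mul hXr (PowerSeries.X_pow_dvd_iff.2 hfo.2)
      obtain ⟨f, hf, hfo, hrf⟩ := key
      obtain ⟨a, ha⟩ := reduce hfo hyd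
      have h1 := ih _ ((MM m).sub_mem hy (mul_mem_M (C_mem R a) hf)) ha
      have h2 := (MM 0).add_mem h1 (mul_mem_M (C_mem R a) hrf)
      have e : r * (y - PowerSeries.C a * f) + PowerSeries.C a * (r * f) = r * y := by ring
      rwa [e] at h2
    · exact ih y hy hd

/-- Adding one element `f` of order `p` with `𝔪 f ⊆ N` adds exactly the value `p`. -/
lemma Delta_sup {R : Subalgebra ℂ 𝒪} {N : Submodule ↥R 𝒪} {f : 𝒪} {p : ℕ}
    (hf : IsO f p) (hp : p ∉ DeltaM R N)
    (hm : ∀ r ∈ R, X ∣ r → r * f ∈ N) :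
    DeltaM R (N ⊔ Submodule.span ↥R {f}) = DeltaM R N ∪ {p} := by
  have hrep : ∀ x ∈ N ⊔ Submodule.span ↥R {f}, ∃ a : ℂ, x - PowerSeries.C a * f ∈ N := by
    intro x hx
    obtain ⟨u, hu, v, hv, rfl⟩ := Submodule.mem_sup.1 hx
    obtain ⟨r, rfl⟩ := Submodule.mem_span_singleton.1 hv
    refine ⟨coeff 0 (r : 𝒪), ?_⟩
    have h1 := hm ((r : 𝒪) - PowerSeries.C (coeff 0 (r : 𝒪))) (R.sub_mem r.2 (C_mem R _))
      (PowerSeries.X_dvd_iff.2 (by simp))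
    have e : u + r • f - PowerSeries.C (coeff 0 (r : 𝒪)) * f
        = u + ((r : 𝒪) - PowerSeries.C (coeff 0 (r : 𝒪))) * f := by
      rw [show r • f = (r : 𝒪) * f from rfl]; ring
    rw [e]
    exact N.add_mem hu h1
  ext n
  constructor
  · intro hn
    obtain ⟨x, hx, hxo⟩ := mem_Delta.1 hn
    obtain ⟨a, ha⟩ := hrep x hx
    by_cases hnp : n = p
    · exact Or.inr hnp
    left
    rcases lt_or_gt_of_ne hnp with hlt | hgt
    · refine mem_Delta.2 ⟨_, ha, ?_, ?_⟩
      · rw [map_sub, PowerSeries.coeff_C_mul, hf.2 n hlt]; simpa using hxo.1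
      · intro k hk
        rw [map_sub, PowerSeries.coeff_C_mul, hf.2 k (hk.trans hlt), hxo.2 k hk]; simp
    · by_cases h0 : a = 0
      · subst h0
        exact mem_Delta.2 ⟨x, by simpa using ha, hxo⟩
      · exfalso
        refine hp (mem_Delta.2 ⟨_, ha, ?_, ?_⟩)
        · rw [map_sub, PowerSeries.coeff_C_mul, hxo.2 p hgt]; simpa using ⟨h0, hf.1⟩
        · intro k hk
          rw [map_sub, PowerSeries.coeff_C_mul, hf.2 k hk, hxo.2 k (hk.trans hgt)]; simp
  · rintro (hn | rfl)
    · obtain ⟨x, hx, hxo⟩ := mem_Delta.1 hn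
      exact mem_Delta.2 ⟨x, Submodule.mem_sup_left hx, hxo⟩
    · exact mem_Delta.2 ⟨f, Submodule.mem_sup_right (Submodule.mem_span_singleton_self f), hf⟩

lemma backward (R : Subalgebra ℂ 𝒪)
    (m : ℕ) (D0 : Set ℕ) (g : ℕ → ℕ) (hflag : IsDFlag R m D0 g)
    (M0 Mm : Submodule ↥R 𝒪)
    (hm : mSmul R Mm ≤ M0.restrictScalars ℂ) (h0 : IsStd R M0)
    (hD0 : Dset R M0 = D0) (hDm : Dset R Mm = DFlagSet D0 g m) :
    IsAdmissibleFlag R m D0 g := by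
  have hex : ∀ i, ∃ f : 𝒪, 1 ≤ i → i ≤ m → f ∈ Mm ∧ IsO f (g i) := by
    intro i
    by_cases hi : 1 ≤ i ∧ i ≤ m
    · have : g i ∈ Dset R Mm := by
        rw [hDm]; exact Or.inr ⟨i, hi, rfl⟩
      obtain ⟨f, hf, hfo⟩ := mem_Delta.1 this.1
      exact ⟨f, fun _ _ => ⟨hf, hfo⟩⟩
    · exact ⟨0, fun h1 h2 => absurd ⟨h1, h2⟩ hi⟩
  choose f hf using hex
  let MM : ℕ → Submodule ↥R 𝒪 := fun i =>
    Nat.rec M0 (fun i N => N ⊔ Submodule.span ↥R {f (i+1)}) i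
  have hs : ∀ i, MM (i+1) = MM i ⊔ Submodule.span ↥R {f (i+1)} := fun i => rfl
  refine ⟨MM, fun i _ => by rw [hs]; exact le_sup_left, ?_⟩
  suffices H : ∀ i ≤ m, M0 ≤ MM i ∧ IsStd R (MM i) ∧ Dset R (MM i) = DFlagSet D0 g i from
    fun i hi => (H i hi).2
  intro i
  induction i with
  | zero =>
    intro _
    exact ⟨le_rfl, h0, by rw [show MM 0 = M0 from rfl, hD0]; simp [DFlagSet]⟩
  | succ i ih =>
    intro hi
    obtain ⟨hle, hstd, hD⟩ := ih (by omega)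
    obtain ⟨hfm, hfo⟩ := hf (i+1) (by omega) hi
    have hg := hflag.2.2.1 (i+1) (by omega) hi
    have hp : g (i+1) ∉ DeltaM R (MM i) := by
      intro hmem
      have : g (i+1) ∈ Dset R (MM i) := ⟨hmem, hg.1⟩
      rw [hD] at this
      rcases this with h | ⟨j, hj, he⟩
      · exact hg.2 h
      · have := hflag.2.1 (show j ∈ Set.Icc 1 m from ⟨hj.1, by have := hj.2; omega⟩)
          (show i+1 ∈ Set.Icc 1 m from ⟨by omega, hi⟩) (by have := hj.2; omega)
        omega
    have hΔ := Delta_sup hfo hp (by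
      intro r hr hX
      apply hle
      apply hm
      refine Submodule.subset_span ⟨r, hr, _, hfm, ?_, rfl⟩
      by_cases hz : r = 0
      · exact Or.inl hz
      · right
        have h1 := ((isO_iff r _).1 ⟨hz, rfl⟩).1
        by_contra hc
        obtain h2 : ord r = 0 := by omega
        rw [h2] at h1
        exact h1 (by simpa using PowerSeries.X_dvd_iff.1 hX))
    refine ⟨hle.trans (by rw [hs]; exact le_sup_left), ⟨?_, ?_⟩, ?_⟩
    · rw [hs]
      exact hstd.1.sup (Submodule.fg_span_singleton _)
    · obtain ⟨x, hx, hxo⟩ := hstd.2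
      exact ⟨x, by rw [hs]; exact Submodule.mem_sup_left hx, hxo⟩
    · rw [Dset, hs, hΔ, Set.union_inter_distrib_right]
      rw [Dset] at hD
      rw [hD]
      have h1 : ({g (i+1)} : Set ℕ) ∩ Gaps R = {g (i+1)} :=
        Set.inter_eq_left.2 (Set.singleton_subset_iff.2 hg.1)
      rw [h1]
      ext n
      simp only [DFlagSet, Set.mem_union, Set.mem_image, Set.mem_Icc, Set.mem_singleton_iff]
      constructor
      · rintro ((h | ⟨j, hj, rfl⟩) | rfl)
        · exact Or.inl h
        · exact Or.inr ⟨j, ⟨hj.1, by omega⟩, rfl⟩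
        · exact Or.inr ⟨i+1, ⟨by omega, le_rfl⟩, rfl⟩
      · rintro (h | ⟨j, hj, rfl⟩)
        · exact Or.inl (Or.inl h)
        · rcases Nat.lt_or_ge j (i+1) with h | h
          · exact Or.inl (Or.inr ⟨j, ⟨hj.1, by omega⟩, rfl⟩)
          · obtain rfl : j = i+1 := by omega
            exact Or.inr rfl

/-- A `D`-flag `𝒟 = (D_0,…,D_m)` is admissible iff there exist standard modules
`𝓜_0 ⊆ 𝓜_m` with `𝔪𝓜_m ⊆ 𝓜_0`, `D_{𝓜_0} = D_0` and `D_{𝓜_m} = D_m`. -/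
theorem statement10 (R : Subalgebra ℂ 𝒪) (c : ℕ) (hR : HasConductor R c)
    (m : ℕ) (D0 : Set ℕ) (g : ℕ → ℕ) (hflag : IsDFlag R m D0 g) :
    IsAdmissibleFlag R m D0 g ↔
      ∃ M0 Mm : Submodule ↥R 𝒪, M0 ≤ Mm ∧
        mSmul R Mm ≤ M0.restrictScalars ℂ ∧
        IsStd R M0 ∧ IsStd R Mm ∧
        Dset R M0 = D0 ∧ Dset R Mm = DFlagSet D0 g m := by
  constructor
  · exact forward R c hR.2.1 m D0 g hflag
  · rintro ⟨M0, Mm, _, hm, h0, _, hD0, hDm⟩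
    exact backward R m D0 g hflag M0 Mm hm h0 hD0 hDm

end
end
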